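/- arXiv:1811.00346 — 4 statements merged into one kernel-verified Lean document; each statement's English description precedes it below -/
import Mathlib

section
/- Let X, U : ℝ² → ℝ and L̄ : ℝ³ → ℝ be smooth (C^∞). Let Ω = {(x,u,p) ∈ ℝ³ : X_x(x,u) + p·X_u(x,u) ≠ 0}, let P(x,u,p) = (U_x + p·U_u)/(X_x + p·X_u) on Ω, let Q(x,u,p,q) = (P_x + p·P_u + q·P_p)/(X_x + p·X_u), and define L(x,u,p) := L̄(X(x,u), U(x,u), P(x,u,p)) · (X_x(x,u) + p·X_u(x,u)) on Ω. Then for all (x,u,p) ∈ Ω and all q ∈ ℝ: E(L)(x,u,p,q) = [L̄_U − L̄_{PX} − P·L̄_{PU} − Q·L̄_{PP}] · (U_u·X_x − U_x·X_u), where the partial derivatives of L̄ (with respect to its three arguments, denoted X, U, P) are evaluated at (X(x,u), U(x,u), P(x,u,p)), P = P(x,u,p), Q = Q(x,u,p,q), and U_u, X_x, U_x, X_u are evaluated at (x,u). In other words, the Euler–Lagrange expression transforms under point transformations as E(L) ↦ E(L)/(U_u·X_x − U_x·X_u). -/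
/-!
Write `D = X_x + p X_u`, `N = U_x + p U_u`, `P = N / D` and `J = U_u X_x - U_x X_u`. Since
`P_p = J / D²`, the chain rule gives, on the open set `D ≠ 0`,
`L_p = L̄_P · J / D + L̄ · X_u` (`pd3p_lagTransform`). This identity holds near every point of that
set, so it may be differentiated once more in each of the three variables; only the gradient of
`L̄`, the gradient of `L̄_P`, and the derivatives of `X`, `U` up to order two occur. With the
symmetry of the second derivatives of `X` and `U` (`pdx_pdu_comm`), the claim becomes an identity
between rational functions in these quantities, with powers of `D` as the only denominators.
-/

/-- Partial derivative with respect to the first variable of a function on `ℝ²`. -/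
noncomputable def pdx (F : ℝ × ℝ → ℝ) (q : ℝ × ℝ) : ℝ :=
  deriv (fun t => F (t, q.2)) q.1

/-- Partial derivative with respect to the second variable of a function on `ℝ²`. -/
noncomputable def pdu (F : ℝ × ℝ → ℝ) (q : ℝ × ℝ) : ℝ :=
  deriv (fun t => F (q.1, t)) q.2

/-- Partial derivative with respect to the first variable of a function on `ℝ³`. -/
noncomputable def pd3x (F : ℝ × ℝ × ℝ → ℝ) (w : ℝ × ℝ × ℝ) : ℝ :=
  deriv (fun t => F (t, w.2.1, w.2.2)) w.1

/-- Partial derivative with respect to the second variable of a function on `ℝ³`. -/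
noncomputable def pd3u (F : ℝ × ℝ × ℝ → ℝ) (w : ℝ × ℝ × ℝ) : ℝ :=
  deriv (fun t => F (w.1, t, w.2.2)) w.2.1

/-- Partial derivative with respect to the third variable of a function on `ℝ³`. -/
noncomputable def pd3p (F : ℝ × ℝ × ℝ → ℝ) (w : ℝ × ℝ × ℝ) : ℝ :=
  deriv (fun t => F (w.1, w.2.1, t)) w.2.2

/-- First prolongation `P(x,u,p) = (U_x + p·U_u)/(X_x + p·X_u)` of the point transformation
`(x,u) ↦ (X(x,u), U(x,u))`. -/
noncomputable def prolong (X U : ℝ × ℝ → ℝ) (w : ℝ × ℝ × ℝ) : ℝ :=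
  (pdx U (w.1, w.2.1) + w.2.2 * pdu U (w.1, w.2.1)) /
    (pdx X (w.1, w.2.1) + w.2.2 * pdu X (w.1, w.2.1))

/-- The transformed Lagrangian `L(x,u,p) = L̄(X,U,P)·(X_x + p·X_u)`. -/
noncomputable def lagTransform (X U : ℝ × ℝ → ℝ) (Lb : ℝ × ℝ × ℝ → ℝ)
    (w : ℝ × ℝ × ℝ) : ℝ :=
  Lb (X (w.1, w.2.1), U (w.1, w.2.1), prolong X U w) *
    (pdx X (w.1, w.2.1) + w.2.2 * pdu X (w.1, w.2.1))

/-- The Euler–Lagrange expression `E(L)(x,u,p,q) = L_u − L_{px} − p·L_{pu} − q·L_{pp}`. -/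
noncomputable def EulerLagrange (L : ℝ × ℝ × ℝ → ℝ) (w : ℝ × ℝ × ℝ) (q : ℝ) : ℝ :=
  pd3u L w - pd3x (pd3p L) w - w.2.2 * pd3u (pd3p L) w - q * pd3p (pd3p L) w

theorem pdx_eq_fderiv {F : ℝ × ℝ → ℝ} (hF : Differentiable ℝ F) (z : ℝ × ℝ) :
    pdx F z = fderiv ℝ F z (1, 0) := by
  have h := (hF z).hasFDerivAt.comp_hasDerivAt z.1
    ((hasDerivAt_id z.1).prodMk (hasDerivAt_const z.1 z.2))
  exact h.deriv

theorem pdu_eq_fderiv {F : ℝ × ℝ → ℝ} (hF : Differentiable ℝ F) (z : ℝ × ℝ) :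
    pdu F z = fderiv ℝ F z (0, 1) := by
  have h := (hF z).hasFDerivAt.comp_hasDerivAt z.2
    ((hasDerivAt_const z.2 z.1).prodMk (hasDerivAt_id z.2))
  exact h.deriv

theorem contDiff_pdx {F : ℝ × ℝ → ℝ} (hF : ContDiff ℝ (⊤ : ℕ∞) F) :
    ContDiff ℝ (⊤ : ℕ∞) (pdx F) := by
  rw [funext (pdx_eq_fderiv (hF.differentiable (by simp)))]
  exact (hF.fderiv_right (m := (⊤ : ℕ∞)) (by simp)).clm_apply contDiff_const

theorem contDiff_pdu {F : ℝ × ℝ → ℝ} (hF : ContDiff ℝ (⊤ : ℕ∞) F) :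
    ContDiff ℝ (⊤ : ℕ∞) (pdu F) := by
  rw [funext (pdu_eq_fderiv (hF.differentiable (by simp)))]
  exact (hF.fderiv_right (m := (⊤ : ℕ∞)) (by simp)).clm_apply contDiff_const

theorem hasDerivAt_pdx {F : ℝ × ℝ → ℝ} (hF : ContDiff ℝ (⊤ : ℕ∞) F) (x u : ℝ) :
    HasDerivAt (fun t => F (t, u)) (pdx F (x, u)) x := by
  have h := (hF.differentiable (by simp) (x, u)).hasFDerivAt.comp_hasDerivAt x
    ((hasDerivAt_id x).prodMk (hasDerivAt_const x u))
  exact h.differentiableAt.hasDerivAt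

theorem hasDerivAt_pdu {F : ℝ × ℝ → ℝ} (hF : ContDiff ℝ (⊤ : ℕ∞) F) (x u : ℝ) :
    HasDerivAt (fun t => F (x, t)) (pdu F (x, u)) u := by
  have h := (hF.differentiable (by simp) (x, u)).hasFDerivAt.comp_hasDerivAt u
    ((hasDerivAt_const u x).prodMk (hasDerivAt_id u))
  exact h.differentiableAt.hasDerivAt

theorem pdx_pdu_comm {F : ℝ × ℝ → ℝ} (hF : ContDiff ℝ (⊤ : ℕ∞) F) (z : ℝ × ℝ) :
    pdx (pdu F) z = pdu (pdx F) z := by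
  have hd : Differentiable ℝ F := hF.differentiable (by simp)
  have hd2 : Differentiable ℝ (fderiv ℝ F) :=
    (hF.fderiv_right (m := (⊤ : ℕ∞)) (by simp)).differentiable (by simp)
  have hsymm : IsSymmSndFDerivAt ℝ F z := hF.contDiffAt.isSymmSndFDerivAt (by simpa using WithTop.coe_le_coe.2 (le_top : (2 : ℕ∞) ≤ ⊤))
  rw [pdx_eq_fderiv ((contDiff_pdu hF).differentiable (by simp)),
    pdu_eq_fderiv ((contDiff_pdx hF).differentiable (by simp)),
    funext (pdx_eq_fderiv hd), funext (pdu_eq_fderiv hd),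
    fderiv_clm_apply (hd2 z) (differentiableAt_const _),
    fderiv_clm_apply (hd2 z) (differentiableAt_const _)]
  simpa using hsymm.eq (1, 0) (0, 1)

/-- The chain rule for a function on `ℝ³` along a differentiable curve, in terms of the three
partial derivatives. -/
theorem hasDerivAt_comp3 {F : ℝ × ℝ × ℝ → ℝ} (hF : ContDiff ℝ (⊤ : ℕ∞) F)
    {a b c : ℝ → ℝ} {a' b' c' t : ℝ}
    (ha : HasDerivAt a a' t) (hb : HasDerivAt b b' t) (hc : HasDerivAt c c' t) :
    HasDerivAt (fun s => F (a s, b s, c s))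
      (pd3x F (a t, b t, c t) * a' + pd3u F (a t, b t, c t) * b' +
        pd3p F (a t, b t, c t) * c') t := by
  have hd : Differentiable ℝ F := hF.differentiable (by simp)
  have h := (hd (a t, b t, c t)).hasFDerivAt.comp_hasDerivAt t (ha.prodMk (hb.prodMk hc))
  have hx : pd3x F (a t, b t, c t) = fderiv ℝ F (a t, b t, c t) (1, 0, 0) :=
    ((hd (a t, b t, c t)).hasFDerivAt.comp_hasDerivAt (a t)
      ((hasDerivAt_id (a t)).prodMk
        ((hasDerivAt_const (a t) (b t)).prodMk (hasDerivAt_const (a t) (c t))))).deriv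
  have hu : pd3u F (a t, b t, c t) = fderiv ℝ F (a t, b t, c t) (0, 1, 0) :=
    ((hd (a t, b t, c t)).hasFDerivAt.comp_hasDerivAt (b t)
      ((hasDerivAt_const (b t) (a t)).prodMk
        ((hasDerivAt_id (b t)).prodMk (hasDerivAt_const (b t) (c t))))).deriv
  have hp : pd3p F (a t, b t, c t) = fderiv ℝ F (a t, b t, c t) (0, 0, 1) :=
    ((hd (a t, b t, c t)).hasFDerivAt.comp_hasDerivAt (c t)
      ((hasDerivAt_const (c t) (a t)).prodMk
        ((hasDerivAt_const (c t) (b t)).prodMk (hasDerivAt_id (c t))))).deriv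
  have hv : ((a', b', c') : ℝ × ℝ × ℝ) =
      a' • ((1, 0, 0) : ℝ × ℝ × ℝ) + b' • ((0, 1, 0) : ℝ × ℝ × ℝ) +
        c' • ((0, 0, 1) : ℝ × ℝ × ℝ) := by
    simp
  rw [hv, map_add, map_add, map_smul, map_smul, map_smul, ← hx, ← hu, ← hp] at h
  refine h.congr_deriv ?_
  simp only [smul_eq_mul]
  ring

theorem contDiff_pd3p {F : ℝ × ℝ × ℝ → ℝ} (hF : ContDiff ℝ (⊤ : ℕ∞) F) :
    ContDiff ℝ (⊤ : ℕ∞) (pd3p F) := by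
  have h : pd3p F = fun w => fderiv ℝ F w (0, 0, 1) := by
    funext w
    exact ((hF.differentiable (by simp) w).hasFDerivAt.comp_hasDerivAt w.2.2
      ((hasDerivAt_const w.2.2 w.1).prodMk
        ((hasDerivAt_const w.2.2 w.2.1).prodMk (hasDerivAt_id w.2.2)))).deriv
  rw [h]
  exact (hF.fderiv_right (m := (⊤ : ℕ∞)) (by simp)).clm_apply contDiff_const

/-- The total derivative `F_x + p F_u`; for `F = X` and `F = U` these are the denominator and the
numerator of the prolongation. -/
noncomputable def totalD (F : ℝ × ℝ → ℝ) (w : ℝ × ℝ × ℝ) : ℝ :=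
  pdx F (w.1, w.2.1) + w.2.2 * pdu F (w.1, w.2.1)

/-- The Jacobian determinant `U_u X_x - U_x X_u` of the point transformation. -/
noncomputable def jac (X U : ℝ × ℝ → ℝ) (z : ℝ × ℝ) : ℝ :=
  pdu U z * pdx X z - pdx U z * pdu X z

section

variable {F X U : ℝ × ℝ → ℝ} {Lb : ℝ × ℝ × ℝ → ℝ}

theorem totalD_hasDerivAt_x (hF : ContDiff ℝ (⊤ : ℕ∞) F) (x u p : ℝ) :
    HasDerivAt (fun t => totalD F (t, u, p))
      (pdx (pdx F) (x, u) + p * pdx (pdu F) (x, u)) x :=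
  (hasDerivAt_pdx (contDiff_pdx hF) x u).add
    ((hasDerivAt_pdx (contDiff_pdu hF) x u).const_mul p)

theorem totalD_hasDerivAt_u (hF : ContDiff ℝ (⊤ : ℕ∞) F) (x u p : ℝ) :
    HasDerivAt (fun t => totalD F (x, t, p))
      (pdu (pdx F) (x, u) + p * pdu (pdu F) (x, u)) u :=
  (hasDerivAt_pdu (contDiff_pdx hF) x u).add
    ((hasDerivAt_pdu (contDiff_pdu hF) x u).const_mul p)

theorem totalD_hasDerivAt_p (F : ℝ × ℝ → ℝ) (x u p : ℝ) :
    HasDerivAt (fun t => totalD F (x, u, t)) (pdu F (x, u)) p := by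
  refine HasDerivAt.congr_deriv
    (((hasDerivAt_id p).mul_const (pdu F (x, u))).const_add (pdx F (x, u))) ?_
  exact one_mul _

theorem continuous_totalD (hF : ContDiff ℝ (⊤ : ℕ∞) F) : Continuous (totalD F) := by
  have h1 := (contDiff_pdx hF).continuous
  have h2 := (contDiff_pdu hF).continuous
  unfold totalD
  fun_prop

theorem prolong_hasDerivAt_x (hX : ContDiff ℝ (⊤ : ℕ∞) X) (hU : ContDiff ℝ (⊤ : ℕ∞) U)
    {x u p : ℝ} (hD : totalD X (x, u, p) ≠ 0) :
    HasDerivAt (fun t => prolong X U (t, u, p))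
      (((pdx (pdx U) (x, u) + p * pdx (pdu U) (x, u)) * totalD X (x, u, p) -
        totalD U (x, u, p) * (pdx (pdx X) (x, u) + p * pdx (pdu X) (x, u))) /
          totalD X (x, u, p) ^ 2) x :=
  (totalD_hasDerivAt_x hU x u p).div (totalD_hasDerivAt_x hX x u p) hD

theorem prolong_hasDerivAt_u (hX : ContDiff ℝ (⊤ : ℕ∞) X) (hU : ContDiff ℝ (⊤ : ℕ∞) U)
    {x u p : ℝ} (hD : totalD X (x, u, p) ≠ 0) :
    HasDerivAt (fun t => prolong X U (x, t, p))
      (((pdu (pdx U) (x, u) + p * pdu (pdu U) (x, u)) * totalD X (x, u, p) -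
        totalD U (x, u, p) * (pdu (pdx X) (x, u) + p * pdu (pdu X) (x, u))) /
          totalD X (x, u, p) ^ 2) u :=
  (totalD_hasDerivAt_u hU x u p).div (totalD_hasDerivAt_u hX x u p) hD

/-- `P_p = J / D²`: in the numerator of the quotient rule the terms containing `p` cancel. -/
theorem prolong_hasDerivAt_p {x u p : ℝ} (hD : totalD X (x, u, p) ≠ 0) :
    HasDerivAt (fun t => prolong X U (x, u, t))
      (jac X U (x, u) / totalD X (x, u, p) ^ 2) p := by
  refine ((totalD_hasDerivAt_p U x u p).div (totalD_hasDerivAt_p X x u p) hD).congr_deriv ?_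
  congr 1
  simp only [totalD, jac]
  ring

/-- The function `L̄_P · J / D + L̄ · X_u`, which equals `L_p` wherever `D ≠ 0`. -/
noncomputable def lagMomentum (X U : ℝ × ℝ → ℝ) (Lb : ℝ × ℝ × ℝ → ℝ) (w : ℝ × ℝ × ℝ) : ℝ :=
  pd3p Lb (X (w.1, w.2.1), U (w.1, w.2.1), prolong X U w) *
      (jac X U (w.1, w.2.1) / totalD X w) +
    Lb (X (w.1, w.2.1), U (w.1, w.2.1), prolong X U w) * pdu X (w.1, w.2.1)

theorem pd3p_lagTransform (hLb : ContDiff ℝ (⊤ : ℕ∞) Lb) {w : ℝ × ℝ × ℝ}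
    (hD : totalD X w ≠ 0) :
    pd3p (lagTransform X U Lb) w = lagMomentum X U Lb w := by
  obtain ⟨x, u, p⟩ := w
  have h := (hasDerivAt_comp3 hLb (hasDerivAt_const p (X (x, u)))
    (hasDerivAt_const p (U (x, u))) (prolong_hasDerivAt_p (U := U) hD)).mul
      (totalD_hasDerivAt_p X x u p)
  refine h.deriv.trans ?_
  simp only [lagMomentum]
  field_simp
  ring

theorem pd3p_lagTransform_eventuallyEq (hX : ContDiff ℝ (⊤ : ℕ∞) X)
    (hLb : ContDiff ℝ (⊤ : ℕ∞) Lb) {w : ℝ × ℝ × ℝ} (hD : totalD X w ≠ 0) :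
    pd3p (lagTransform X U Lb) =ᶠ[nhds w] lagMomentum X U Lb := by
  filter_upwards [(continuous_totalD hX).continuousAt.eventually_ne hD] with v hv
  exact pd3p_lagTransform hLb hv

end

/-- **Transformation of the Euler–Lagrange expression under point transformations:**
`E(L)(x,u,p,q) = (L̄_U − L̄_{PX} − P·L̄_{PU} − Q·L̄_{PP})·(U_u·X_x − U_x·X_u)`, i.e.
`E(L) ↦ E(L)/(U_u·X_x − U_x·X_u)`. -/
theorem eulerLagrange_transform
    (X U : ℝ × ℝ → ℝ) (Lb : ℝ × ℝ × ℝ → ℝ)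
    (hX : ContDiff ℝ (⊤ : ℕ∞) X) (hU : ContDiff ℝ (⊤ : ℕ∞) U) (hLb : ContDiff ℝ (⊤ : ℕ∞) Lb)
    (x u p : ℝ) (hden : pdx X (x, u) + p * pdu X (x, u) ≠ 0) (q : ℝ) :
    EulerLagrange (lagTransform X U Lb) (x, u, p) q =
      (pd3u Lb (X (x, u), U (x, u), prolong X U (x, u, p)) -
          pd3x (pd3p Lb) (X (x, u), U (x, u), prolong X U (x, u, p)) -
          prolong X U (x, u, p) *
            pd3u (pd3p Lb) (X (x, u), U (x, u), prolong X U (x, u, p)) -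
          ((pd3x (prolong X U) (x, u, p) + p * pd3u (prolong X U) (x, u, p) +
              q * pd3p (prolong X U) (x, u, p)) /
            (pdx X (x, u) + p * pdu X (x, u))) *
            pd3p (pd3p Lb) (X (x, u), U (x, u), prolong X U (x, u, p))) *
        (pdu U (x, u) * pdx X (x, u) - pdx U (x, u) * pdu X (x, u)) := by
  have hD : totalD X (x, u, p) ≠ 0 := hden
  have hev := pd3p_lagTransform_eventuallyEq (U := U) hX hLb hD
  have hLp := contDiff_pd3p hLb
  have hPx := prolong_hasDerivAt_x hX hU hD
  have hPu := prolong_hasDerivAt_u hX hU hD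
  have hPp := prolong_hasDerivAt_p (U := U) hD
  have eLu := ((hasDerivAt_comp3 hLb (hasDerivAt_pdu hX x u) (hasDerivAt_pdu hU x u) hPu).mul
    (totalD_hasDerivAt_u hX x u p)).deriv
  have eJx := ((hasDerivAt_pdx (contDiff_pdu hU) x u).mul
    (hasDerivAt_pdx (contDiff_pdx hX) x u)).sub
    ((hasDerivAt_pdx (contDiff_pdx hU) x u).mul (hasDerivAt_pdx (contDiff_pdu hX) x u))
  have eJu := ((hasDerivAt_pdu (contDiff_pdu hU) x u).mul
    (hasDerivAt_pdu (contDiff_pdx hX) x u)).sub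
    ((hasDerivAt_pdu (contDiff_pdx hU) x u).mul (hasDerivAt_pdu (contDiff_pdu hX) x u))
  have eLpx := (((hasDerivAt_comp3 hLp (hasDerivAt_pdx hX x u) (hasDerivAt_pdx hU x u) hPx).mul
    (eJx.div (totalD_hasDerivAt_x hX x u p) hD)).add
    ((hasDerivAt_comp3 hLb (hasDerivAt_pdx hX x u) (hasDerivAt_pdx hU x u) hPx).mul
      (hasDerivAt_pdx (contDiff_pdu hX) x u))).deriv
  have eLpu := (((hasDerivAt_comp3 hLp (hasDerivAt_pdu hX x u) (hasDerivAt_pdu hU x u) hPu).mul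
    (eJu.div (totalD_hasDerivAt_u hX x u p) hD)).add
    ((hasDerivAt_comp3 hLb (hasDerivAt_pdu hX x u) (hasDerivAt_pdu hU x u) hPu).mul
      (hasDerivAt_pdu (contDiff_pdu hX) x u))).deriv
  have eLpp := (((hasDerivAt_comp3 hLp (hasDerivAt_const p (X (x, u)))
      (hasDerivAt_const p (U (x, u))) hPp).mul
    ((hasDerivAt_const p (jac X U (x, u))).div (totalD_hasDerivAt_p X x u p) hD)).add
    ((hasDerivAt_comp3 hLb (hasDerivAt_const p (X (x, u)))
      (hasDerivAt_const p (U (x, u))) hPp).mul_const (pdu X (x, u)))).deriv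
  -- `L_p` may be replaced by its formula on the three coordinate lines through the point.
  have cx : pd3x (pd3p (lagTransform X U Lb)) (x, u, p) = pd3x (lagMomentum X U Lb) (x, u, p) :=
    (hev.comp_tendsto (g := fun t : ℝ => (t, u, p))
      (Continuous.tendsto (by fun_prop) x)).deriv_eq
  have cu : pd3u (pd3p (lagTransform X U Lb)) (x, u, p) = pd3u (lagMomentum X U Lb) (x, u, p) :=
    (hev.comp_tendsto (g := fun t : ℝ => (x, t, p))
      (Continuous.tendsto (by fun_prop) u)).deriv_eq
  have cp : pd3p (pd3p (lagTransform X U Lb)) (x, u, p) = pd3p (lagMomentum X U Lb) (x, u, p) :=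
    (hev.comp_tendsto (g := fun t : ℝ => (x, u, t))
      (Continuous.tendsto (by fun_prop) p)).deriv_eq
  have hP : prolong X U (x, u, p) = totalD U (x, u, p) / totalD X (x, u, p) := rfl
  have hDX : totalD X (x, u, p) = pdx X (x, u) + p * pdu X (x, u) := rfl
  have hDU : totalD U (x, u, p) = pdx U (x, u) + p * pdu U (x, u) := rfl
  have hJ : jac X U (x, u) = pdu U (x, u) * pdx X (x, u) - pdx U (x, u) * pdu X (x, u) := rfl
  simp only [EulerLagrange]
  rw [cx, cu, cp]
  rw [show pd3u (lagTransform X U Lb) (x, u, p) = _ from eLu,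
    show pd3x (lagMomentum X U Lb) (x, u, p) = _ from eLpx,
    show pd3u (lagMomentum X U Lb) (x, u, p) = _ from eLpu,
    show pd3p (lagMomentum X U Lb) (x, u, p) = _ from eLpp,
    show pd3x (prolong X U) (x, u, p) = _ from hPx.deriv,
    show pd3u (prolong X U) (x, u, p) = _ from hPu.deriv,
    show pd3p (prolong X U) (x, u, p) = _ from hPp.deriv,
    pdx_pdu_comm hX, pdx_pdu_comm hU, ← hDX]
  simp only [Pi.mul_apply, Pi.sub_apply, Pi.div_apply, hJ]
  -- The values of `L̄` and its derivatives become independent atoms before `P` is expanded.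
  generalize pd3p (pd3p Lb) (X (x, u), U (x, u), prolong X U (x, u, p)) = LPP
  generalize pd3u (pd3p Lb) (X (x, u), U (x, u), prolong X U (x, u, p)) = LPU
  generalize pd3x (pd3p Lb) (X (x, u), U (x, u), prolong X U (x, u, p)) = LPX
  generalize pd3p Lb (X (x, u), U (x, u), prolong X U (x, u, p)) = LP
  generalize pd3u Lb (X (x, u), U (x, u), prolong X U (x, u, p)) = LU
  generalize pd3x Lb (X (x, u), U (x, u), prolong X U (x, u, p)) = LX
  generalize Lb (X (x, u), U (x, u), prolong X U (x, u, p)) = L0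
  rw [hP, hDU]
  -- Eliminating `X_x` in favour of `D` keeps `D` a single atom.
  have hXx : pdx X (x, u) = totalD X (x, u, p) - p * pdu X (x, u) := by rw [hDX]; ring
  rw [hXx]
  generalize totalD X (x, u, p) = D at hD ⊢
  field_simp
  ring
end

section
/- Let X, U : ℝ² → ℝ and L̄ : ℝ³ → ℝ be smooth (C^∞). Let Ω = {(x,u,p) ∈ ℝ³ : X_x(x,u) + p·X_u(x,u) ≠ 0}, let P(x,u,p) = (U_x + p·U_u)/(X_x + p·X_u) on Ω, and define L(x,u,p) := L̄(X(x,u), U(x,u), P(x,u,p)) · (X_x(x,u) + p·X_u(x,u)) on Ω. Then for all (x,u,p) ∈ Ω: (∂²L/∂p²)(x,u,p) = L̄_{PP}(X(x,u), U(x,u), P(x,u,p)) · ((∂P/∂p)(x,u,p))² · (X_x(x,u) + p·X_u(x,u)), where L̄_{PP} denotes the second partial derivative of L̄ with respect to its third argument. Equivalently, L̄_{PP} evaluated at the transformed point equals L_{pp}/(P_p² · (X_x + p·X_u)). -/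
/-- The derivative of the Möbius function `P(p) = (c + p d) / (a + p b)`. -/
lemma hasDerivAt_mobius (a b c d p : ℝ) (h : a + p * b ≠ 0) :
    HasDerivAt (fun t => (c + t * d) / (a + t * b)) ((d * a - c * b) / (a + p * b) ^ 2) p := by
  have h1 : HasDerivAt (fun t : ℝ => c + t * d) d p := by
    simpa using ((hasDerivAt_id p).mul_const d).const_add c
  have h2 : HasDerivAt (fun t : ℝ => a + t * b) b p := by
    simpa using ((hasDerivAt_id p).mul_const b).const_add a
  exact (h1.fun_div h2 h).congr_deriv (by ring)

/-- The transformation law in the variable `p` alone: for `D(p) = a + p b` and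
`P = (c + p d) / D`, one has `(f(P) D)'' = f''(P) P'² D`. -/
lemma deriv_deriv_comp_mobius_mul (f : ℝ → ℝ) (hf : ContDiff ℝ 2 f) (a b c d p : ℝ)
    (h : a + p * b ≠ 0) :
    deriv (fun s => deriv (fun t => f ((c + t * d) / (a + t * b)) * (a + t * b)) s) p =
      deriv (fun s => deriv f s) ((c + p * d) / (a + p * b)) *
        (deriv (fun t => (c + t * d) / (a + t * b)) p) ^ 2 * (a + p * b) := by
  have hf1 : Differentiable ℝ f := hf.differentiable (by norm_num)
  have hf2 : Differentiable ℝ (deriv f) :=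
    (ContDiff.deriv' (n := 1) (by simpa [one_add_one_eq_two] using hf)).differentiable
      (by norm_num)
  have hD : ∀ s : ℝ, HasDerivAt (fun t : ℝ => a + t * b) b s := fun s => by
    simpa using ((hasDerivAt_id s).mul_const b).const_add a
  have hfP (g : ℝ → ℝ) (hg : Differentiable ℝ g) (s : ℝ) (hs : a + s * b ≠ 0) :
      HasDerivAt (fun t => g ((c + t * d) / (a + t * b)))
        (deriv g ((c + s * d) / (a + s * b)) * ((d * a - c * b) / (a + s * b) ^ 2)) s :=
    HasDerivAt.comp s (hg _).hasDerivAt (hasDerivAt_mobius a b c d s hs)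
  -- The formula for the first derivative is only valid where `D ≠ 0`, an open condition.
  have hev : (fun s => deriv (fun t => f ((c + t * d) / (a + t * b)) * (a + t * b)) s)
      =ᶠ[nhds p] fun s => deriv f ((c + s * d) / (a + s * b)) * ((d * a - c * b) / (a + s * b))
        + f ((c + s * d) / (a + s * b)) * b := by
    filter_upwards [(hD p).continuousAt.eventually_ne h] with s hs
    rw [((hfP f hf1 s hs).fun_mul (hD s)).deriv]
    field_simp
  have hk : HasDerivAt (fun s => (d * a - c * b) / (a + s * b))
      (-((d * a - c * b) * b) / (a + p * b) ^ 2) p :=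
    ((hasDerivAt_const p (d * a - c * b)).fun_div (hD p) h).congr_deriv (by ring)
  rw [hev.deriv_eq, (((hfP _ hf2 p h).fun_mul hk).fun_add ((hfP f hf1 p h).mul_const b)).deriv,
    (hasDerivAt_mobius a b c d p h).deriv]
  field_simp
  ring

/-- **Transformation law for `w = L_{pp}` under point transformations:**
`L_{pp} = L̄_{PP}·P_p²·(X_x + p·X_u)`, i.e. `L̄_{PP} = L_{pp}/(P_p²·(X_x + p·X_u))`. -/
theorem lagrangian_pp_transform
    (X U : ℝ × ℝ → ℝ) (Lb : ℝ × ℝ × ℝ → ℝ)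
    (hX : ContDiff ℝ (⊤ : ℕ∞) X) (hU : ContDiff ℝ (⊤ : ℕ∞) U) (hLb : ContDiff ℝ (⊤ : ℕ∞) Lb)
    (x u p : ℝ) (hden : pdx X (x, u) + p * pdu X (x, u) ≠ 0) :
    pd3p (pd3p (lagTransform X U Lb)) (x, u, p) =
      pd3p (pd3p Lb) (X (x, u), U (x, u), prolong X U (x, u, p)) *
        (pd3p (prolong X U) (x, u, p)) ^ 2 *
        (pdx X (x, u) + p * pdu X (x, u)) := by
  exact deriv_deriv_comp_mobius_mul (fun t => Lb (X (x, u), U (x, u), t))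
    ((hLb.of_le (WithTop.coe_le_coe.2 le_top)).comp
      (contDiff_const.prodMk (contDiff_const.prodMk contDiff_id)))
    (pdx X (x, u)) (pdu X (x, u)) (pdx U (x, u)) (pdu U (x, u)) p hden
end

section
/- Let Ω ⊆ ℝ² be open, let I ⊆ ℝ be an open interval containing the first coordinates of points of Ω, let f : I → ℝ be C³ with f'(x) > 0 on I, let g : I → ℝ be C², let u : Ω → ℝ be C³, and let ū : ℝ² → ℝ be C³, such that ū(f(x), f'(x)·y + g(x)) = u(x,y) + (f''(x)·y + g'(x))/f'(x) for all (x,y) ∈ Ω. Suppose u_{yy}(x,y) > 0 at a point (x,y) ∈ Ω. Then ū_{YYY}/(ū_{YY})^{3/2} evaluated at the point (f(x), f'(x)·y + g(x)) equals u_{yyy}/(u_{yy})^{3/2} evaluated at (x,y), where the subscripts Y and y denote partial derivatives with respect to the second argument. -/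
/-!
Fix the first coordinate `x` and put `a = f'(x) > 0`, `b = g(x)`. On the vertical line through `p`
the transformation acts by `t ↦ a * t + b`, and `u` changes by a function affine in `t`. So, near
`p.2`, the restrictions `v` of `u` and `w` of `ub` satisfy `w (a * t + b) = v t + (c * t + d) / a`.
Differentiating twice kills the affine term and gives `v'' = a² w''`, then `v''' = a³ w'''`
(`deriv_two_three_of_affine`). Since `(a²)^(3/2) = a³`, the factors of `a` cancel in the quotient
(`div_rpow_three_halves_scale`).
-/

/-- Partial derivative with respect to the first variable of a function on `ℝ²`. -/
noncomputable def pdX (F : ℝ × ℝ → ℝ) (q : ℝ × ℝ) : ℝ :=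
  deriv (fun t => F (t, q.2)) q.1

/-- Partial derivative with respect to the second variable of a function on `ℝ²`. -/
noncomputable def pdY (F : ℝ × ℝ → ℝ) (q : ℝ × ℝ) : ℝ :=
  deriv (fun t => F (q.1, t)) q.2

/-- Chain rule for an affine substitution; no differentiability of `w` is needed, because for
`a = 0` both sides vanish and otherwise the substitution is invertible. -/
theorem deriv_comp_affine (w : ℝ → ℝ) (a b : ℝ) :
    deriv (fun t => w (a * t + b)) = fun t => a * deriv w (a * t + b) := by
  funext t
  have h := deriv_comp_mul_left a (fun s => w (s + b)) t
  rw [deriv_comp_add_const] at h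
  simpa using h

/-- Second and third derivatives under an affine change of the argument combined with the addition
of an affine function. -/
theorem deriv_two_three_of_affine (v w : ℝ → ℝ) (a b c d y : ℝ) (hw : Differentiable ℝ w)
    (h : ∀ᶠ t in nhds y, w (a * t + b) = v t + (c * t + d) / a) :
    deriv (deriv v) y = a ^ 2 * deriv (deriv w) (a * y + b) ∧
      deriv (deriv (deriv v)) y = a ^ 3 * deriv (deriv (deriv w)) (a * y + b) := by
  have h0 : v =ᶠ[nhds y] fun t => w (a * t + b) - (c * t + d) / a := by
    filter_upwards [h] with t ht
    rw [ht]; ring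
  have e1 : deriv (fun t => w (a * t + b) - (c * t + d) / a) =
      fun t => a * deriv w (a * t + b) - c / a := by
    funext t
    have hl : HasDerivAt (fun t => (c * t + d) / a) (c / a) t := by
      simpa using (((hasDerivAt_id t).const_mul c).add_const d).div_const a
    have hd : DifferentiableAt ℝ (fun t => w (a * t + b)) t := by fun_prop
    rw [deriv_fun_sub hd hl.differentiableAt, hl.deriv, deriv_comp_affine]
  have e2 : deriv (fun t => a * deriv w (a * t + b) - c / a) =
      fun t => a ^ 2 * deriv (deriv w) (a * t + b) := by
    funext t
    rw [deriv_sub_const, deriv_const_mul_field, deriv_comp_affine]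
    ring
  have e3 : deriv (fun t => a ^ 2 * deriv (deriv w) (a * t + b)) =
      fun t => a ^ 3 * deriv (deriv (deriv w)) (a * t + b) := by
    funext t
    rw [deriv_const_mul_field, deriv_comp_affine]
    ring
  have h2 := h0.deriv.deriv
  rw [e1, e2] at h2
  have h3 := h2.deriv
  rw [e3] at h3
  exact ⟨h2.eq_of_nhds, h3.eq_of_nhds⟩

theorem div_rpow_three_halves_scale (a B C : ℝ) (ha : 0 < a) (hB : 0 ≤ B) :
    C / B ^ ((3 : ℝ) / 2) = a ^ 3 * C / (a ^ 2 * B) ^ ((3 : ℝ) / 2) := by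
  have h : (a ^ 2) ^ ((3 : ℝ) / 2) = a ^ 3 := by
    rw [← Real.rpow_natCast, ← Real.rpow_mul ha.le, ← Real.rpow_natCast]
    norm_num
  rw [Real.mul_rpow (by positivity) hB, h, mul_div_mul_left _ _ (by positivity)]

/-- **`u_{yyy}/u_{yy}^{3/2}` is a differential invariant of Medolaghi's pseudo-group**
`X = f(x)`, `Y = f'(x)·y + g(x)`, `U = u + (f''(x)·y + g'(x))/f'(x)` (on the branch
`u_{yy} > 0`). -/
theorem medolaghi_invariant_one
    (Ω : Set (ℝ × ℝ)) (hΩ : IsOpen Ω)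
    (I : Set ℝ) (hIo : IsOpen I) (hIc : I.OrdConnected) (hmem : ∀ p ∈ Ω, p.1 ∈ I)
    (f : ℝ → ℝ) (hf : ContDiffOn ℝ 3 f I) (hf' : ∀ x ∈ I, 0 < deriv f x)
    (g : ℝ → ℝ) (hg : ContDiffOn ℝ 2 g I)
    (u : ℝ × ℝ → ℝ) (hu : ContDiffOn ℝ 3 u Ω)
    (ub : ℝ × ℝ → ℝ) (hub : ContDiff ℝ 3 ub)
    (hrel : ∀ p ∈ Ω,
      ub (f p.1, deriv f p.1 * p.2 + g p.1) =
        u p + (deriv (deriv f) p.1 * p.2 + deriv g p.1) / deriv f p.1)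
    (p : ℝ × ℝ) (hp : p ∈ Ω) (hyy : 0 < pdY (pdY u) p) :
    pdY (pdY (pdY ub)) (f p.1, deriv f p.1 * p.2 + g p.1) /
        (pdY (pdY ub) (f p.1, deriv f p.1 * p.2 + g p.1)) ^ ((3 : ℝ) / 2) =
      pdY (pdY (pdY u)) p / (pdY (pdY u) p) ^ ((3 : ℝ) / 2) := by
  have ha := hf' p.1 (hmem p hp)
  have hw : Differentiable ℝ (fun t => ub (f p.1, t)) :=
    (hub.differentiable (by norm_num)).comp (by fun_prop)
  have hev : ∀ᶠ t in nhds p.2, (p.1, t) ∈ Ω :=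
    (Continuous.prodMk_right p.1).continuousAt.eventually (hΩ.mem_nhds hp)
  obtain ⟨h2, h3⟩ := deriv_two_three_of_affine (fun t => u (p.1, t)) (fun t => ub (f p.1, t))
    (deriv f p.1) (g p.1) (deriv (deriv f) p.1) (deriv g p.1) p.2 hw
    (hev.mono fun t ht => hrel (p.1, t) ht)
  -- Iterated `pdY` is definitionally the iterated derivative of the restriction to a vertical line.
  change pdY (pdY u) p = deriv f p.1 ^ 2 *
    pdY (pdY ub) (f p.1, deriv f p.1 * p.2 + g p.1) at h2
  change pdY (pdY (pdY u)) p = deriv f p.1 ^ 3 *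
    pdY (pdY (pdY ub)) (f p.1, deriv f p.1 * p.2 + g p.1) at h3
  rw [h2] at hyy
  rw [h2, h3]
  exact div_rpow_three_halves_scale _ _ _ ha (pos_of_mul_pos_right hyy (by positivity)).le
end

section
/- Let Ω ⊆ ℝ² be open, let I ⊆ ℝ be an open interval containing the first coordinates of points of Ω, let f : I → ℝ be C³ with f'(x) > 0 on I, let g : I → ℝ be C², let u : Ω → ℝ be C³, and let ū : ℝ² → ℝ be C³, such that ū(f(x), f'(x)·y + g(x)) = u(x,y) + (f''(x)·y + g'(x))/f'(x) for all (x,y) ∈ Ω. Suppose u_{yy}(x,y) > 0 at a point (x,y) ∈ Ω. Then (ū_{XYY} + ū·ū_{YYY} + 2·ū_Y·ū_{YY})/(ū_{YY})^{3/2} evaluated at the point (f(x), f'(x)·y + g(x)) equals (u_{xyy} + u·u_{yyy} + 2·u_y·u_{yy})/(u_{yy})^{3/2} evaluated at (x,y), where subscripts X, Y (respectively x, y) denote partial derivatives with respect to the first and second arguments. -/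
open Filter Topology

/-- The chain rule along a plane curve, in terms of the partial derivatives `pdX` and `pdY`. -/
lemma hasDerivAt_comp_curve {F : ℝ × ℝ → ℝ} {a b : ℝ → ℝ} {a' b' t : ℝ}
    (hF : DifferentiableAt ℝ F (a t, b t)) (ha : HasDerivAt a a' t) (hb : HasDerivAt b b' t) :
    HasDerivAt (fun s => F (a s, b s)) (a' * pdX F (a t, b t) + b' * pdY F (a t, b t)) t := by
  have hX : pdX F (a t, b t) = fderiv ℝ F (a t, b t) (1, 0) :=
    (hF.hasFDerivAt.comp_hasDerivAt_of_eq (a t)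
      ((hasDerivAt_id (a t)).prodMk (hasDerivAt_const (a t) (b t))) rfl).deriv
  have hY : pdY F (a t, b t) = fderiv ℝ F (a t, b t) (0, 1) :=
    (hF.hasFDerivAt.comp_hasDerivAt_of_eq (b t)
      ((hasDerivAt_const (b t) (a t)).prodMk (hasDerivAt_id (b t))) rfl).deriv
  have h := hF.hasFDerivAt.comp_hasDerivAt_of_eq t (ha.prodMk hb) rfl
  have e : ((a', b') : ℝ × ℝ) = a' • ((1, 0) : ℝ × ℝ) + b' • ((0, 1) : ℝ × ℝ) := by
    simp
  rw [e, map_add, map_smul, map_smul, ← hX, ← hY] at h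
  exact h

lemma contDiff_pdY {F : ℝ × ℝ → ℝ} {m n : WithTop ℕ∞} (hF : ContDiff ℝ n F) (hmn : m + 1 ≤ n) :
    ContDiff ℝ m (pdY F) := by
  have hn : n ≠ 0 := by
    rintro rfl
    simp at hmn
  have h : pdY F = fun q => fderiv ℝ F q (0, 1) := by
    funext q
    exact ((hF.differentiable hn q).hasFDerivAt.comp_hasDerivAt_of_eq q.2
      ((hasDerivAt_const q.2 q.1).prodMk (hasDerivAt_id q.2)) rfl).deriv
  rw [h]
  exact (hF.fderiv_right hmn).clm_apply contDiff_const

lemma pdX_eq_of_eqOn {Ω : Set (ℝ × ℝ)} (hΩ : IsOpen Ω) {u v : ℝ × ℝ → ℝ}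
    (h : ∀ q ∈ Ω, u q = v q) {p : ℝ × ℝ} (hp : p ∈ Ω) {d : ℝ}
    (hv : HasDerivAt (fun t => v (t, p.2)) d p.1) : pdX u p = d := by
  refine Eq.trans (EventuallyEq.deriv_eq ?_) hv.deriv
  have hc : Continuous fun t : ℝ => (t, p.2) := by fun_prop
  filter_upwards [(hΩ.preimage hc).mem_nhds hp] with t ht using h _ ht

lemma pdY_eq_of_eqOn {Ω : Set (ℝ × ℝ)} (hΩ : IsOpen Ω) {u v : ℝ × ℝ → ℝ}
    (h : ∀ q ∈ Ω, u q = v q) {p : ℝ × ℝ} (hp : p ∈ Ω) {d : ℝ}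
    (hv : HasDerivAt (fun t => v (p.1, t)) d p.2) : pdY u p = d := by
  refine Eq.trans (EventuallyEq.deriv_eq ?_) hv.deriv
  have hc : Continuous fun t : ℝ => (p.1, t) := by fun_prop
  filter_upwards [(hΩ.preimage hc).mem_nhds hp] with t ht using h _ ht

/-- On a vertical line the map `y ↦ (c, a * y + b)` has constant first coordinate, so only `pdY`
contributes to the derivative. -/
lemma hasDerivAt_comp_vertical {F : ℝ × ℝ → ℝ} (hF : Differentiable ℝ F) (c a b y : ℝ) :
    HasDerivAt (fun t => F (c, a * t + b)) (a * pdY F (c, a * y + b)) y := by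
  have hb : HasDerivAt (fun t => a * t + b) a y := by
    simpa using ((hasDerivAt_id y).const_mul a).add_const b
  simpa using hasDerivAt_comp_curve (a := fun _ => c) (b := fun t => a * t + b)
    (hF _) (hasDerivAt_const y c) hb

/-- **`(u_{xyy} + u·u_{yyy} + 2u_y·u_{yy})/u_{yy}^{3/2}` is a differential invariant of
Medolaghi's pseudo-group** `X = f(x)`, `Y = f'(x)·y + g(x)`,
`U = u + (f''(x)·y + g'(x))/f'(x)` (on the branch `u_{yy} > 0`). -/
theorem medolaghi_invariant_two
    (Ω : Set (ℝ × ℝ)) (hΩ : IsOpen Ω)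
    (I : Set ℝ) (hIo : IsOpen I) (hIc : I.OrdConnected) (hmem : ∀ p ∈ Ω, p.1 ∈ I)
    (f : ℝ → ℝ) (hf : ContDiffOn ℝ 3 f I) (hf' : ∀ x ∈ I, 0 < deriv f x)
    (g : ℝ → ℝ) (hg : ContDiffOn ℝ 2 g I)
    (u : ℝ × ℝ → ℝ) (hu : ContDiffOn ℝ 3 u Ω)
    (ub : ℝ × ℝ → ℝ) (hub : ContDiff ℝ 3 ub)
    (hrel : ∀ p ∈ Ω,
      ub (f p.1, deriv f p.1 * p.2 + g p.1) =
        u p + (deriv (deriv f) p.1 * p.2 + deriv g p.1) / deriv f p.1)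
    (p : ℝ × ℝ) (hp : p ∈ Ω) (hyy : 0 < pdY (pdY u) p) :
    (pdX (pdY (pdY ub)) (f p.1, deriv f p.1 * p.2 + g p.1) +
          ub (f p.1, deriv f p.1 * p.2 + g p.1) *
            pdY (pdY (pdY ub)) (f p.1, deriv f p.1 * p.2 + g p.1) +
          2 * pdY ub (f p.1, deriv f p.1 * p.2 + g p.1) *
            pdY (pdY ub) (f p.1, deriv f p.1 * p.2 + g p.1)) /
        (pdY (pdY ub) (f p.1, deriv f p.1 * p.2 + g p.1)) ^ ((3 : ℝ) / 2) =
      (pdX (pdY (pdY u)) p + u p * pdY (pdY (pdY u)) p +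
          2 * pdY u p * pdY (pdY u) p) /
        (pdY (pdY u) p) ^ ((3 : ℝ) / 2) := by
  have hub1 : ContDiff ℝ 2 (pdY ub) := contDiff_pdY hub (by norm_num)
  have hub2 : ContDiff ℝ 1 (pdY (pdY ub)) := contDiff_pdY hub1 (by norm_num)
  have d0 : Differentiable ℝ ub := hub.differentiable (by norm_num)
  have d1 : Differentiable ℝ (pdY ub) := hub1.differentiable (by norm_num)
  have d2 : Differentiable ℝ (pdY (pdY ub)) := hub2.differentiable (by norm_num)
  have u0 : ∀ q ∈ Ω, u q = ub (f q.1, deriv f q.1 * q.2 + g q.1) -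
      (deriv (deriv f) q.1 * q.2 + deriv g q.1) / deriv f q.1 := fun q hq => by
    rw [hrel q hq]
    ring
  have u1 : ∀ q ∈ Ω, pdY u q = deriv f q.1 * pdY ub (f q.1, deriv f q.1 * q.2 + g q.1) -
      deriv (deriv f) q.1 / deriv f q.1 := fun q hq => by
    refine pdY_eq_of_eqOn hΩ u0 hq
      ((hasDerivAt_comp_vertical d0 (f q.1) (deriv f q.1) (g q.1) q.2).fun_sub ?_)
    simpa using (((hasDerivAt_id q.2).const_mul (deriv (deriv f) q.1)).add_const
      (deriv g q.1)).div_const (deriv f q.1)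
  have u2 : ∀ q ∈ Ω, pdY (pdY u) q =
      deriv f q.1 * (deriv f q.1 * pdY (pdY ub) (f q.1, deriv f q.1 * q.2 + g q.1)) :=
    fun q hq => pdY_eq_of_eqOn hΩ u1 hq
      (((hasDerivAt_comp_vertical d1 (f q.1) (deriv f q.1) (g q.1) q.2).const_mul
        (deriv f q.1)).sub_const
        (deriv (deriv f) q.1 / deriv f q.1))
  have u3 : pdY (pdY (pdY u)) p = deriv f p.1 * (deriv f p.1 * (deriv f p.1 *
      pdY (pdY (pdY ub)) (f p.1, deriv f p.1 * p.2 + g p.1))) :=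
    pdY_eq_of_eqOn hΩ u2 hp
      (((hasDerivAt_comp_vertical d2 (f p.1) (deriv f p.1) (g p.1) p.2).const_mul
        (deriv f p.1)).const_mul (deriv f p.1))
  have hI : I ∈ 𝓝 p.1 := hIo.mem_nhds (hmem p hp)
  have hfd : HasDerivAt f (deriv f p.1) p.1 :=
    ((hf.contDiffAt hI).differentiableAt (by norm_num)).hasDerivAt
  have hgd : HasDerivAt g (deriv g p.1) p.1 :=
    ((hg.contDiffAt hI).differentiableAt (by norm_num)).hasDerivAt
  have hfdd : HasDerivAt (deriv f) (deriv (deriv f) p.1) p.1 :=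
    (((hf.deriv_of_isOpen (m := 2) hIo (by norm_num)).contDiffAt hI).differentiableAt
      (by norm_num)).hasDerivAt
  have hY : HasDerivAt (fun t => deriv f t * p.2 + g t)
      (deriv (deriv f) p.1 * p.2 + deriv g p.1) p.1 := (hfdd.mul_const _).add hgd
  have u2x := pdX_eq_of_eqOn hΩ u2 hp
    (hfdd.mul (hfdd.mul (hasDerivAt_comp_curve (d2 _) hfd hY)))
  have hpos := hf' p.1 (hmem p hp)
  have e0 := u0 p hp
  have e1 := u1 p hp
  have e2 := u2 p hp
  simp only at u2x
  generalize hφ : (f p.1, deriv f p.1 * p.2 + g p.1) = P at *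
  generalize deriv (deriv f) p.1 = c at *
  generalize deriv g p.1 = k at *
  generalize deriv f p.1 = a at *
  rw [e2] at hyy
  have hB : 0 < pdY (pdY ub) P :=
    pos_of_mul_pos_right (pos_of_mul_pos_right hyy hpos.le) hpos.le
  have hden : (a * (a * pdY (pdY ub) P)) ^ ((3 : ℝ) / 2) =
      a ^ 3 * (pdY (pdY ub) P) ^ ((3 : ℝ) / 2) := by
    rw [← mul_assoc, Real.mul_rpow (by positivity) hB.le, ← pow_two, ← Real.rpow_natCast a 2,
      ← Real.rpow_mul hpos.le, ← Real.rpow_natCast a 3]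
    norm_num
  have hnum : pdX (pdY (pdY u)) p + u p * pdY (pdY (pdY u)) p + 2 * pdY u p * pdY (pdY u) p =
      a ^ 3 * (pdX (pdY (pdY ub)) P + ub P * pdY (pdY (pdY ub)) P +
        2 * pdY ub P * pdY (pdY ub) P) := by
    rw [u2x, u3, e2, e1, e0]
    field_simp
    ring
  rw [hnum, e2, hden, mul_div_mul_left _ _ (by positivity)]
end
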